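/- arXiv:0810.2462 — 3 statements merged into one kernel-verified Lean document; each statement's English description precedes it below -/
import Mathlib

section
/- Let u ∈ L¹_loc(ℝ^N; ℝ) and suppose there is a constant C̃ ≥ 0 such that for every λ > 0, every R > 0 and every x₀ ∈ ℝ^N, (1/λ) ∫_{ℝ^N} ∫_{B(x₀,R)} |u(x) − u(x−z)| μ(z) dx dz ≤ C̃. Then u ∈ BV(ℝ^N; ℝ) and TV(u) ≤ C̃ / C₁, where C₁ = ∫_{ℝ^N} |x₁| μ₁(‖x‖) dx; moreover 0 < C₁ < 1. -/
/-!
Write `K(z) = μ₁(‖z‖)`, a continuous compactly supported density on `ℝ^N`; polar coordinates give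
`∫ K = 1` (`Mollifier.integral_radial`). Since `|x₁| < 1` wherever `K ≠ 0`, and `K` is nonzero at
some `x` with `x₁ ≠ 0`, this yields `0 < C₁ < 1`. As `K` is invariant under reflections,
`∫ |L z| K(z) dz = C₁ ‖L‖` for every linear functional `L` (`Mollifier.lintegral_functional`).

After the substitution `z ↦ λ z`, the hypothesis reads
`∫ ∫_{B(x₀,R)} |u(x) - u(x - λ z)| K(z) dx dz ≤ λ C̃` for all `λ`, `R`, `x₀` (`IncrementBound`).
By Tonelli and the uniformity in `x₀`, this bound passes from `u` to each mollification
`w = ρ ⋆ u` (`IncrementBound.convolution`). For the smooth function `w`, dividing by `λ` and letting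
`λ → 0`, Fatou's lemma gives `∫_{B(x₀,R)} ∫ |∇w(x) · z| K(z) dz dx ≤ C̃`, that is
`C₁ ∫_{B(x₀,R)} |∇w| ≤ C̃` (`IncrementBound.lintegral_fderiv`). Integration by parts turns this into
`∫ w div ψ ≤ C̃ / C₁` for every test field `ψ` (`integral_mul_div_le`), and `∫ w div ψ` tends to
`∫ u div ψ` as the mollification parameter tends to `0` (`tendsto_integral_convolution`).
-/

open MeasureTheory Real Set Filter Topology RealInnerProductSpace

noncomputable section

/-- `ℝ^N` as a Euclidean space. -/
abbrev Euc (N : ℕ) := EuclideanSpace ℝ (Fin N)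

/-- `ω_N`, the Lebesgue volume of the unit ball of `ℝ^N` (with `ω_0 = 1`). -/
def ballVol (N : ℕ) : ℝ := (volume (Metric.ball (0 : Euc N) 1)).toReal

/-- The hypotheses (2.4) on the radial profile `μ₁`: a smooth nonnegative function
supported in `[0,1)`, normalized by `∫₀^∞ r^{N-1} μ₁(r) dr = 1/(N ω_N)`, nonincreasing,
and with all derivatives of order `≥ 1` vanishing at `0`. -/
structure Mollifier (N : ℕ) (μ₁ : ℝ → ℝ) : Prop where
  smooth : ContDiff ℝ (⊤ : ℕ∞) μ₁
  nonneg : ∀ r : ℝ, 0 ≤ r → 0 ≤ μ₁ r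
  supp : ∀ r : ℝ, 1 ≤ r → μ₁ r = 0
  normalized : (∫ r in Ioi (0:ℝ), r ^ (N - 1) * μ₁ r) = 1 / (N * ballVol N)
  deriv_nonpos : ∀ r : ℝ, 0 ≤ r → deriv μ₁ r ≤ 0
  derivZero : ∀ n : ℕ, 1 ≤ n → iteratedDeriv n μ₁ 0 = 0

/-- The rescaled mollifier `μ(x) = λ^{-N} μ₁(‖x‖/λ)`. -/
def moll {N : ℕ} (μ₁ : ℝ → ℝ) (lam : ℝ) (x : Euc N) : ℝ := (lam ^ N)⁻¹ * μ₁ (‖x‖ / lam)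

/-- The set of test values defining the total variation of `u`. -/
def TVset {N : ℕ} (u : Euc N → ℝ) : Set ℝ :=
  {a | ∃ ψ : Euc N → Euc N, ContDiff ℝ 1 ψ ∧ HasCompactSupport ψ ∧ (∀ x, ‖ψ x‖ ≤ 1) ∧
    a = ∫ x, u x * ∑ i, fderiv ℝ (fun y => ψ y i) x (EuclideanSpace.single i 1)}

/-- The total variation of `u : ℝ^N → ℝ`. -/
def TV {N : ℕ} (u : Euc N → ℝ) : ℝ := sSup (TVset u)

/-- `u ∈ BV(ℝ^N; ℝ)`, i.e. `TV u < +∞`. -/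
def IsBV {N : ℕ} (u : Euc N → ℝ) : Prop := BddAbove (TVset u)

open scoped ENNReal Convolution

/-! ### The radial kernel and the constant `C₁` -/

lemma Mollifier.continuous_radial {N : ℕ} {μ₁ : ℝ → ℝ} (h : Mollifier N μ₁) :
    Continuous (fun x : Euc N => μ₁ ‖x‖) :=
  h.smooth.continuous.comp continuous_norm

lemma Mollifier.hasCompactSupport_radial {N : ℕ} {μ₁ : ℝ → ℝ} (h : Mollifier N μ₁) :
    HasCompactSupport (fun x : Euc N => μ₁ ‖x‖) := by
  refine HasCompactSupport.intro (isCompact_closedBall (0 : Euc N) 1) fun x hx => ?_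
  apply h.supp
  simp at hx
  exact hx.le

lemma Mollifier.integrable_radial {N : ℕ} {μ₁ : ℝ → ℝ} (h : Mollifier N μ₁) :
    Integrable (fun x : Euc N => μ₁ ‖x‖) :=
  h.continuous_radial.integrable_of_hasCompactSupport h.hasCompactSupport_radial

lemma continuous_abs_coord {N : ℕ} (i : Fin N) : Continuous fun x : Euc N => |x i| := by
  fun_prop

lemma Mollifier.integrable_coord {N : ℕ} {μ₁ : ℝ → ℝ} (h : Mollifier N μ₁) (i : Fin N) :
    Integrable (fun x : Euc N => |x i| * μ₁ ‖x‖) :=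
  ((continuous_abs_coord i).mul h.continuous_radial).integrable_of_hasCompactSupport
    h.hasCompactSupport_radial.mul_left

/-- Polar coordinates turn the one-dimensional normalization into unit mass on `ℝ^N`. -/
lemma Mollifier.integral_radial {N : ℕ} (hN : 0 < N) {μ₁ : ℝ → ℝ} (h : Mollifier N μ₁) :
    ∫ x : Euc N, μ₁ ‖x‖ = 1 := by
  have : Nonempty (Fin N) := ⟨⟨0, hN⟩⟩
  have hN' : (N : ℝ) ≠ 0 := by positivity
  have hv : (volume : Measure (Euc N)).real (Metric.ball 0 1) ≠ 0 :=
    ENNReal.toReal_ne_zero.2 ⟨(Metric.measure_ball_pos _ _ one_pos).ne',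
      Metric.isBounded_ball.measure_lt_top.ne⟩
  rw [integral_fun_norm_addHaar volume μ₁, finrank_euclideanSpace_fin]
  simp only [smul_eq_mul, nsmul_eq_mul]
  rw [h.normalized, ballVol]
  change _ * ((volume : Measure (Euc N)).real (Metric.ball 0 1) *
    (1 / (_ * (volume : Measure (Euc N)).real (Metric.ball 0 1)))) = 1
  field_simp

lemma Mollifier.coord_lt_one {N : ℕ} (hN : 0 < N) {μ₁ : ℝ → ℝ} (h : Mollifier N μ₁)
    (i : Fin N) : (∫ x : Euc N, |x i| * μ₁ ‖x‖) < 1 := by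
  rw [← h.integral_radial hN, ← sub_pos, ← integral_sub h.integrable_radial (h.integrable_coord i)]
  have hle : ∀ x : Euc N, |x i| ≤ ‖x‖ := fun x => PiLp.norm_apply_le x i
  have hfac : ∀ x : Euc N, μ₁ ‖x‖ - |x i| * μ₁ ‖x‖ = (1 - |x i|) * μ₁ ‖x‖ := fun x => by ring
  simp only [hfac]
  have hnn : ∀ x : Euc N, 0 ≤ (1 - |x i|) * μ₁ ‖x‖ := by
    intro x
    rcases le_total 1 ‖x‖ with hx | hx
    · simp [h.supp _ hx]
    · exact mul_nonneg (sub_nonneg.2 ((hle x).trans hx)) (h.nonneg _ (norm_nonneg _))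
  have hcont : Continuous fun x : Euc N => (1 - |x i|) * μ₁ ‖x‖ :=
    (continuous_const.sub (continuous_abs_coord i)).mul h.continuous_radial
  obtain ⟨x, hx⟩ : ∃ x : Euc N, μ₁ ‖x‖ ≠ 0 := by
    by_contra! hc
    have := h.integral_radial hN
    simp [hc] at this
  refine hcont.integral_pos_of_hasCompactSupport_nonneg_nonzero h.hasCompactSupport_radial.mul_left
    hnn (x := x) (mul_ne_zero ?_ hx)
  have : ‖x‖ < 1 := by
    by_contra! hc
    exact hx (h.supp _ hc)
  exact (sub_pos.2 ((hle x).trans_lt this)).ne'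

lemma Mollifier.coord_pos {N : ℕ} (hN : 0 < N) {μ₁ : ℝ → ℝ} (h : Mollifier N μ₁)
    (i : Fin N) : 0 < ∫ x : Euc N, |x i| * μ₁ ‖x‖ := by
  have hnn : ∀ x : Euc N, 0 ≤ |x i| * μ₁ ‖x‖ := fun x =>
    mul_nonneg (abs_nonneg _) (h.nonneg _ (norm_nonneg _))
  -- Some `x ≠ 0` has `μ₁ ‖x‖ ≠ 0`; only the norm matters, so `x` can be moved onto the `i`-th axis.
  obtain ⟨x, hx0, hx⟩ : ∃ x : Euc N, x ≠ 0 ∧ μ₁ ‖x‖ ≠ 0 := by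
    by_contra! hc
    have : Nonempty (Fin N) := ⟨i⟩
    have h1 := h.integral_radial hN
    have : (fun x : Euc N => μ₁ ‖x‖) =ᵐ[volume] 0 := by
      filter_upwards [Measure.ae_ne volume (0 : Euc N)] with x hx using hc x hx
    rw [integral_congr_ae this] at h1
    simp at h1
  refine ((continuous_abs_coord i).mul
    h.continuous_radial).integral_pos_of_hasCompactSupport_nonneg_nonzero
    h.hasCompactSupport_radial.mul_left hnn (x := EuclideanSpace.single i ‖x‖) ?_
  simp [hx0, hx]

/-- By rotation invariance, `∫ |L z| μ₁(‖z‖) dz = C₁ ‖L‖` for every linear functional `L`. -/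
lemma Mollifier.lintegral_functional {N : ℕ} {μ₁ : ℝ → ℝ} (h : Mollifier N μ₁)
    (i : Fin N) (L : Euc N →L[ℝ] ℝ) :
    ∫⁻ z, ‖L z‖ₑ * ENNReal.ofReal (μ₁ ‖z‖)
      = ENNReal.ofReal (∫ x : Euc N, |x i| * μ₁ ‖x‖) * ‖L‖ₑ := by
  obtain ⟨v, rfl⟩ := (InnerProductSpace.toDual ℝ (Euc N)).surjective L
  set w : Euc N := EuclideanSpace.single i ‖v‖ with hw
  have hvw : ‖w‖ = ‖v‖ := by simp [hw]
  set ρ : Euc N ≃ₗᵢ[ℝ] Euc N := Submodule.reflection (Submodule.span ℝ {w - v})ᗮ with hρ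
  have hρw : ρ w = v := Submodule.reflection_sub hvw
  have hmp : MeasurePreserving ρ (volume : Measure (Euc N)) volume := ρ.measurePreserving
  rw [← hmp.lintegral_comp_emb ρ.toHomeomorph.measurableEmbedding]
  rw [ofReal_integral_eq_lintegral_ofReal (h.integrable_coord i)
    (ae_of_all _ fun x => mul_nonneg (abs_nonneg _) (h.nonneg _ (norm_nonneg _)))]
  rw [← lintegral_mul_const' _ _ (by simp)]
  refine lintegral_congr fun z => ?_
  have : inner ℝ v (ρ z) = ‖v‖ * z i := by
    rw [← hρw, ρ.inner_map_map, hρw, hw, EuclideanSpace.inner_single_left]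
    simp
  rw [LinearIsometryEquiv.enorm_map, InnerProductSpace.toDual_apply_apply, this, ρ.norm_map,
    ENNReal.ofReal_mul (abs_nonneg _), enorm_mul, enorm_norm, ← Real.norm_eq_abs, ofReal_norm]
  ring

/-! ### The increment bound: rescaling, mollification, passage to the gradient -/

/-- The increment kernel `(z, x) ↦ |u(x) - u(x-z)| μ(z)` is integrable on `ℝ^N × B(x₀,R)`, so that
the iterated Bochner integral of the hypothesis is a genuine integral. -/
lemma Mollifier.integrable_increment {N : ℕ} {μ₁ : ℝ → ℝ} (h : Mollifier N μ₁)
    {u : Euc N → ℝ} (hu : LocallyIntegrable u volume) {lam : ℝ} (hlam : 0 < lam)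
    (R : ℝ) (x₀ : Euc N) :
    Integrable (fun p : Euc N × Euc N => |u p.2 - u (p.2 - p.1)| * moll μ₁ lam p.1)
      ((volume : Measure (Euc N)).prod (volume.restrict (Metric.ball x₀ R))) := by
  -- Only the values of `u` on `B(x₀, R + λ)` matter, so `u` may be truncated to be integrable.
  set v : Euc N → ℝ := (Metric.closedBall x₀ (R + lam)).indicator u with hv
  have hvi : Integrable v := by
    rw [hv, integrable_indicator_iff measurableSet_closedBall]
    exact hu.integrableOn_isCompact (isCompact_closedBall _ _)
  have hzero : ∀ z : Euc N, lam ≤ ‖z‖ → moll μ₁ lam z = 0 := fun z hz => by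
    rw [moll, h.supp _ ((one_le_div hlam).2 hz), mul_zero]
  have hmc : Continuous (moll μ₁ lam : Euc N → ℝ) :=
    continuous_const.mul (h.smooth.continuous.comp (continuous_norm.div_const _))
  have hms : HasCompactSupport (moll μ₁ lam : Euc N → ℝ) :=
    HasCompactSupport.intro (isCompact_closedBall (0 : Euc N) lam) fun x hx => by
      apply hzero
      simp at hx
      exact hx.le
  have hmi : Integrable (moll μ₁ lam : Euc N → ℝ) := hmc.integrable_of_hasCompactSupport hms
  have h1 : Integrable (fun p : Euc N × Euc N => v p.2 * moll μ₁ lam p.1)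
      ((volume : Measure (Euc N)).prod volume) := by
    simpa [mul_comm] using hmi.mul_prod hvi
  have h2 : Integrable (fun p : Euc N × Euc N => v (p.2 - p.1) * moll μ₁ lam p.1)
      ((volume : Measure (Euc N)).prod volume) := by
    have := (hmi.convolution_integrand (ContinuousLinearMap.mul ℝ ℝ) hvi).swap
    simpa [Function.comp_def, mul_comm] using this
  have h3 := (h1.sub h2).abs.mono_measure
    (Measure.prod_mono le_rfl (Measure.restrict_le_self (s := Metric.ball x₀ R)) :
      (volume : Measure (Euc N)).prod (volume.restrict (Metric.ball x₀ R)) ≤ _)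
  refine h3.congr ?_
  have hae : ∀ᵐ p : Euc N × Euc N ∂((volume : Measure (Euc N)).prod
      (volume.restrict (Metric.ball x₀ R))), p.2 ∈ Metric.ball x₀ R :=
    Measure.quasiMeasurePreserving_snd.ae (ae_restrict_mem measurableSet_ball)
  filter_upwards [hae] with p hp
  have hm0 : 0 ≤ moll μ₁ lam p.1 :=
    mul_nonneg (by positivity) (h.nonneg _ (by positivity))
  simp only [Pi.sub_apply, ← sub_mul, abs_mul, abs_of_nonneg hm0]
  rcases le_or_gt lam ‖p.1‖ with hz | hz
  · simp [hzero _ hz]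
  · have hp' : dist p.2 x₀ < R := hp
    have e1 : v p.2 = u p.2 := indicator_of_mem (by
      rw [Metric.mem_closedBall]; linarith) _
    have e2 : v (p.2 - p.1) = u (p.2 - p.1) := indicator_of_mem (by
      rw [Metric.mem_closedBall]
      have : dist (p.2 - p.1) p.2 = ‖p.1‖ := by simp
      linarith [dist_triangle (p.2 - p.1) p.2 x₀]) _
    rw [e1, e2]

/-- The hypothesis of the theorem as a statement on nonnegative integrals, with the variable `z`
rescaled by `λ`. Its stability under translation, averaging and Fatou limits drives the proof. -/
def IncrementBound {N : ℕ} (μ₁ : ℝ → ℝ) (C : ℝ) (u : Euc N → ℝ) : Prop :=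
  ∀ lam R : ℝ, 0 < lam → 0 < R → ∀ x₀ : Euc N,
    ∫⁻ z : Euc N, ∫⁻ x in Metric.ball x₀ R,
      ‖u x - u (x - lam • z)‖ₑ * ENNReal.ofReal (μ₁ ‖z‖) ≤ ENNReal.ofReal (lam * C)

lemma Mollifier.incrementBound {N : ℕ} {μ₁ : ℝ → ℝ} (h : Mollifier N μ₁)
    {u : Euc N → ℝ} (hu : LocallyIntegrable u volume) (hum : Measurable u) {C : ℝ}
    (hbound : ∀ lam R : ℝ, 0 < lam → 0 < R → ∀ x₀ : Euc N,
      (1 / lam) * ∫ z : Euc N, ∫ x in Metric.ball x₀ R, |u x - u (x - z)| * moll μ₁ lam z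
        ≤ C) : IncrementBound μ₁ C u := by
  intro lam R hlam hR x₀
  have hμm : Measurable μ₁ := h.smooth.continuous.measurable
  have hb := hbound lam R hlam hR x₀
  have hint := h.integrable_increment hu hlam R x₀
  have hm0 : ∀ z : Euc N, 0 ≤ moll μ₁ lam z := fun z =>
    mul_nonneg (by positivity) (h.nonneg _ (by positivity))
  have e1 : ENNReal.ofReal (∫ z : Euc N, ∫ x in Metric.ball x₀ R,
        |u x - u (x - z)| * moll μ₁ lam z)
      = ∫⁻ z : Euc N, ∫⁻ x in Metric.ball x₀ R,
        ‖u x - u (x - z)‖ₑ * ENNReal.ofReal (moll μ₁ lam z) := by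
    have hmeas : Measurable (fun p : Euc N × Euc N =>
        ‖u p.2 - u (p.2 - p.1)‖ₑ * ENNReal.ofReal (moll μ₁ lam p.1)) := by
      unfold moll; fun_prop
    rw [← integral_prod _ hint, ofReal_integral_eq_lintegral_ofReal hint
      (ae_of_all _ fun p => mul_nonneg (abs_nonneg _) (hm0 _)),
      ← lintegral_prod _ hmeas.aemeasurable]
    refine lintegral_congr fun p => ?_
    rw [ENNReal.ofReal_mul (abs_nonneg _), Real.enorm_eq_ofReal_abs]
  set H : Euc N → ℝ≥0∞ := fun z => ∫⁻ x in Metric.ball x₀ R,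
    ‖u x - u (x - z)‖ₑ * ENNReal.ofReal (μ₁ (‖z‖ / lam)) with hH
  have hHm : Measurable H := by
    have : Measurable (Function.uncurry fun (z x : Euc N) =>
      ‖u x - u (x - z)‖ₑ * ENNReal.ofReal (μ₁ (‖z‖ / lam))) := by
      unfold Function.uncurry; fun_prop
    exact this.lintegral_prod_right
  have e2 : ∫⁻ z : Euc N, ∫⁻ x in Metric.ball x₀ R,
        ‖u x - u (x - z)‖ₑ * ENNReal.ofReal (moll μ₁ lam z) = ∫⁻ z, H (lam • z) := by
    rw [← lintegral_map hHm (measurable_const_smul lam), Measure.map_addHaar_smul _ hlam.ne',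
      lintegral_smul_measure, finrank_euclideanSpace_fin, smul_eq_mul,
      ← lintegral_const_mul' _ _ (by simp)]
    refine lintegral_congr fun z => ?_
    rw [hH, ← lintegral_const_mul' _ _ (by simp)]
    refine lintegral_congr fun x => ?_
    rw [moll, ENNReal.ofReal_mul (by positivity), abs_of_nonneg (by positivity)]
    ring
  have e3 : ∫⁻ z : Euc N, ∫⁻ x in Metric.ball x₀ R,
      ‖u x - u (x - lam • z)‖ₑ * ENNReal.ofReal (μ₁ ‖z‖) = ∫⁻ z, H (lam • z) := by
    refine lintegral_congr fun z => ?_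
    rw [hH]
    simp only [norm_smul, Real.norm_eq_abs, abs_of_pos hlam, mul_div_cancel_left₀ _ hlam.ne']
  rw [e3, ← e2, ← e1]
  apply ENNReal.ofReal_le_ofReal
  rw [one_div, inv_mul_le_iff₀ hlam] at hb
  exact hb

/-- Mollifying against a probability density preserves the increment bound: this is where the
uniformity in the centre `x₀` of the ball is used. -/
lemma IncrementBound.convolution {N : ℕ} {μ₁ : ℝ → ℝ} (h : Mollifier N μ₁)
    {u : Euc N → ℝ} (hu : LocallyIntegrable u volume) (hum : Measurable u) {C : ℝ}
    (hb : IncrementBound μ₁ C u) {ρ : Euc N → ℝ} (hρc : Continuous ρ) (hρs : HasCompactSupport ρ)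
    (hρ0 : ∀ x, 0 ≤ ρ x) (hρ1 : ∫ x, ρ x = 1) :
    IncrementBound μ₁ C (ρ ⋆[ContinuousLinearMap.lsmul ℝ ℝ, volume] u) := by
  intro lam R hlam hR x₀
  have hμm : Measurable μ₁ := h.smooth.continuous.measurable
  have hρm : Measurable ρ := hρc.measurable
  have hconv : ∀ x, Integrable (fun y => ρ y * u (x - y)) := fun x =>
    hρs.convolutionExists_left (ContinuousLinearMap.lsmul ℝ ℝ) hρc hu x
  have hpt : ∀ x x' : Euc N, ‖(ρ ⋆[ContinuousLinearMap.lsmul ℝ ℝ, volume] u) x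
      - (ρ ⋆[ContinuousLinearMap.lsmul ℝ ℝ, volume] u) x'‖ₑ
      ≤ ∫⁻ y, ENNReal.ofReal (ρ y) * ‖u (x - y) - u (x' - y)‖ₑ := by
    intro x x'
    simp only [convolution_def, ContinuousLinearMap.lsmul_apply, smul_eq_mul]
    rw [← integral_sub (hconv x) (hconv x')]
    refine (enorm_integral_le_lintegral_enorm _).trans_eq (lintegral_congr fun y => ?_)
    rw [← mul_sub, enorm_mul, Real.enorm_of_nonneg (hρ0 y)]
  calc
    _ ≤ ∫⁻ z : Euc N, ∫⁻ x in Metric.ball x₀ R, ∫⁻ y : Euc N, ENNReal.ofReal (ρ y) *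
          (‖u (x - y) - u (x - y - lam • z)‖ₑ * ENNReal.ofReal (μ₁ ‖z‖)) := by
        refine lintegral_mono fun z => lintegral_mono fun x => ?_
        refine (mul_le_mul_left (hpt _ _) _).trans_eq ?_
        rw [← lintegral_mul_const' _ _ (by simp)]
        refine lintegral_congr fun y => ?_
        rw [sub_right_comm, mul_assoc]
    _ = ∫⁻ z : Euc N, ∫⁻ y : Euc N, ∫⁻ x in Metric.ball x₀ R, ENNReal.ofReal (ρ y) *
          (‖u (x - y) - u (x - y - lam • z)‖ₑ * ENNReal.ofReal (μ₁ ‖z‖)) := by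
        refine lintegral_congr fun z => lintegral_lintegral_swap ?_
        refine Measurable.aemeasurable ?_
        unfold Function.uncurry; fun_prop
    _ = ∫⁻ y : Euc N, ∫⁻ z : Euc N, ∫⁻ x in Metric.ball x₀ R, ENNReal.ofReal (ρ y) *
          (‖u (x - y) - u (x - y - lam • z)‖ₑ * ENNReal.ofReal (μ₁ ‖z‖)) := by
        refine lintegral_lintegral_swap ?_
        refine Measurable.aemeasurable ?_
        unfold Function.uncurry
        refine Measurable.lintegral_prod_right
          (f := fun (p : Euc N × Euc N) (x : Euc N) => ENNReal.ofReal (ρ p.2) *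
          (‖u (x - p.2) - u (x - p.2 - lam • p.1)‖ₑ * ENNReal.ofReal (μ₁ ‖p.1‖))) ?_
        unfold Function.uncurry
        fun_prop
    _ = ∫⁻ y : Euc N, ENNReal.ofReal (ρ y) * ∫⁻ z : Euc N, ∫⁻ x in Metric.ball (x₀ - y) R,
          ‖u x - u (x - lam • z)‖ₑ * ENNReal.ofReal (μ₁ ‖z‖) := by
        refine lintegral_congr fun y => ?_
        rw [← lintegral_const_mul' _ _ (by simp)]
        refine lintegral_congr fun z => ?_
        rw [lintegral_const_mul' _ _ (by simp)]
        congr 1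
        rw [← lintegral_indicator measurableSet_ball, ← lintegral_indicator measurableSet_ball,
          ← lintegral_sub_right_eq_self ((Metric.ball (x₀ - y) R).indicator _) y]
        refine lintegral_congr fun x => ?_
        have : x ∈ Metric.ball x₀ R ↔ x - y ∈ Metric.ball (x₀ - y) R := by
          simp [Metric.mem_ball, dist_eq_norm]
        by_cases hx : x ∈ Metric.ball x₀ R
        · rw [indicator_of_mem hx, indicator_of_mem (this.1 hx)]
        · rw [indicator_of_notMem hx, indicator_of_notMem (mt this.2 hx)]
    _ ≤ ∫⁻ y : Euc N, ENNReal.ofReal (ρ y) * ENNReal.ofReal (lam * C) :=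
        lintegral_mono fun y => mul_le_mul_right (hb lam R hlam hR _) _
    _ = ENNReal.ofReal (lam * C) := by
        rw [lintegral_mul_const' _ _ (by simp), ← ofReal_integral_eq_lintegral_ofReal
          (hρc.integrable_of_hasCompactSupport hρs) (ae_of_all _ hρ0), hρ1]
        simp

/-- For a `C¹` function, letting `λ → 0` in the increment bound (Fatou) bounds the gradient. -/
lemma IncrementBound.lintegral_fderiv {N : ℕ} {μ₁ : ℝ → ℝ} (h : Mollifier N μ₁) (i : Fin N)
    {w : Euc N → ℝ} (hw : ContDiff ℝ 1 w) {C : ℝ}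
    (hb : IncrementBound μ₁ C w) {R : ℝ} (hR : 0 < R) (x₀ : Euc N) :
    ENNReal.ofReal (∫ x : Euc N, |x i| * μ₁ ‖x‖) * ∫⁻ x in Metric.ball x₀ R, ‖fderiv ℝ w x‖ₑ
      ≤ ENNReal.ofReal C := by
  have hμm : Measurable μ₁ := h.smooth.continuous.measurable
  have hwm : Measurable w := hw.continuous.measurable
  have hdc : Continuous (fderiv ℝ w) := hw.continuous_fderiv one_ne_zero
  set t : ℕ → ℝ := fun n => 1 / ((n : ℝ) + 1) with ht
  have ht0 : ∀ n, 0 < t n := fun n => by simp only [ht]; positivity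
  have htl : Tendsto t atTop (𝓝 0) := tendsto_one_div_add_atTop_nhds_zero_nat
  set M : Measure (Euc N × Euc N) :=
    (volume : Measure (Euc N)).prod (volume.restrict (Metric.ball x₀ R)) with hM
  set F : ℕ → Euc N × Euc N → ℝ≥0∞ := fun n p =>
    ENNReal.ofReal (t n)⁻¹ * (‖w p.2 - w (p.2 - t n • p.1)‖ₑ * ENNReal.ofReal (μ₁ ‖p.1‖)) with hF
  have hFm : ∀ n, Measurable (F n) := fun n => by simp only [hF]; fun_prop
  have hFle : ∀ n, ∫⁻ p, F n p ∂M ≤ ENNReal.ofReal C := by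
    intro n
    rw [hM, lintegral_const_mul' _ _ (by simp), lintegral_prod _ (by fun_prop)]
    refine (mul_le_mul_right (hb (t n) R (ht0 n) hR x₀) _).trans_eq ?_
    rw [← ENNReal.ofReal_mul (inv_nonneg.2 (ht0 n).le), inv_mul_cancel_left₀ (ht0 n).ne']
  have hlim : ∀ p : Euc N × Euc N, Tendsto (fun n => F n p) atTop
      (𝓝 (‖fderiv ℝ w p.2 p.1‖ₑ * ENNReal.ofReal (μ₁ ‖p.1‖))) := by
    intro p
    have hd : HasDerivAt (fun s : ℝ => w (p.2 - s • p.1)) (- fderiv ℝ w p.2 p.1) 0 := by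
      have h1 : HasFDerivAt w (fderiv ℝ w p.2) (p.2 - (0 : ℝ) • p.1) := by
        simpa using (hw.differentiable one_ne_zero p.2).hasFDerivAt
      have h2 : HasDerivAt (fun s : ℝ => p.2 - s • p.1) (-p.1) 0 := by
        simpa using ((hasDerivAt_id (0 : ℝ)).smul_const p.1).const_sub p.2
      have h3 := h1.comp_hasDerivAt (0 : ℝ) h2
      rw [map_neg] at h3
      exact h3
    have hs := hd.tendsto_slope_zero
    have htn : Tendsto t atTop (𝓝[≠] 0) :=
      tendsto_nhdsWithin_iff.2 ⟨htl, Eventually.of_forall fun n => (ht0 n).ne'⟩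
    have h3 := (hs.comp htn).enorm
    rw [enorm_neg] at h3
    have h4 := ENNReal.Tendsto.mul_const h3 (b := ENNReal.ofReal (μ₁ ‖p.1‖)) (Or.inr (by simp))
    refine h4.congr fun n => ?_
    simp only [hF, Function.comp_apply, zero_add, zero_smul, sub_zero, smul_eq_mul]
    rw [enorm_mul, Real.enorm_of_nonneg (inv_nonneg.2 (ht0 n).le), enorm_sub_rev, mul_assoc]
  have hfatou := lintegral_liminf_le (μ := M) (u := atTop) hFm
  simp only [(hlim _).liminf_eq] at hfatou
  have hle : liminf (fun n => ∫⁻ p, F n p ∂M) atTop ≤ ENNReal.ofReal C :=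
    liminf_le_of_frequently_le' (Frequently.of_forall hFle)
  refine le_trans (le_of_eq ?_) (hfatou.trans hle)
  have hGm : Measurable fun p : Euc N × Euc N =>
      ‖fderiv ℝ w p.2 p.1‖ₑ * ENNReal.ofReal (μ₁ ‖p.1‖) := by
    have : Continuous fun p : Euc N × Euc N => fderiv ℝ w p.2 p.1 := by fun_prop
    have := this.measurable
    fun_prop
  rw [hM, lintegral_prod_symm _ hGm.aemeasurable, ← lintegral_const_mul' _ _ (by simp)]
  refine lintegral_congr fun x => ?_
  exact (h.lintegral_functional i (fderiv ℝ w x)).symm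

/-! ### Testing against vector fields -/

/-- Integration by parts: if the `L¹` norm of `∇w` on all balls is at most `A`, then `A` bounds the
pairing of the `C¹` function `w` with `div ψ` for every admissible test field `ψ`. -/
lemma integral_mul_div_le {N : ℕ} {w : Euc N → ℝ} (hw : ContDiff ℝ 1 w) {A : ℝ} (hA : 0 ≤ A)
    (hb : ∀ R : ℝ, 0 < R → ∫⁻ x in Metric.ball (0 : Euc N) R, ‖fderiv ℝ w x‖ₑ ≤ ENNReal.ofReal A)
    {ψ : Euc N → Euc N} (hψ : ContDiff ℝ 1 ψ) (hψs : HasCompactSupport ψ) (hψ1 : ∀ x, ‖ψ x‖ ≤ 1) :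
    ∫ x, w x * ∑ i, fderiv ℝ (fun y => ψ y i) x (EuclideanSpace.single i 1) ≤ A := by
  have hdc : Continuous (fderiv ℝ w) := hw.continuous_fderiv one_ne_zero
  have hci : ∀ i, ContDiff ℝ 1 fun y => ψ y i := fun i => contDiff_euclidean.1 hψ i
  have hsi : ∀ i, HasCompactSupport fun y => ψ y i := fun i =>
    hψs.comp_left (g := fun v : Euc N => v i) rfl
  have hdi : ∀ i, Continuous fun x => fderiv ℝ (fun y => ψ y i) x (EuclideanSpace.single i 1) :=
    fun i => ((hci i).continuous_fderiv one_ne_zero).clm_apply continuous_const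
  have hdsi : ∀ i, HasCompactSupport
      fun x => fderiv ℝ (fun y => ψ y i) x (EuclideanSpace.single i 1) :=
    fun i => (hsi i).fderiv_apply ℝ _
  have hI1 : ∀ i, Integrable fun x =>
      w x * fderiv ℝ (fun y => ψ y i) x (EuclideanSpace.single i 1) := fun i =>
    (hw.continuous.mul (hdi i)).integrable_of_hasCompactSupport (hdsi i).mul_left
  have hI2 : ∀ i, Integrable fun x => fderiv ℝ w x (EuclideanSpace.single i 1) * ψ x i := fun i =>
    ((hdc.clm_apply continuous_const).mul (hci i).continuous).integrable_of_hasCompactSupport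
      (hsi i).mul_left
  have hI3 : ∀ i, Integrable fun x => w x * ψ x i := fun i =>
    (hw.continuous.mul (hci i).continuous).integrable_of_hasCompactSupport (hsi i).mul_left
  have hibp : ∫ x, w x * ∑ i, fderiv ℝ (fun y => ψ y i) x (EuclideanSpace.single i 1)
      = - ∫ x, fderiv ℝ w x (ψ x) := by
    simp only [Finset.mul_sum]
    rw [integral_finsetSum _ fun i _ => hI1 i]
    have hsum : ∀ x, fderiv ℝ w x (ψ x)
        = ∑ i, fderiv ℝ w x (EuclideanSpace.single i 1) * ψ x i := by
      intro x
      conv_lhs => rw [← (EuclideanSpace.basisFun (Fin N) ℝ).sum_repr (ψ x)]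
      simp [mul_comm]
    simp only [hsum]
    rw [integral_finsetSum _ fun i _ => hI2 i, ← Finset.sum_neg_distrib]
    refine Finset.sum_congr rfl fun i _ => ?_
    exact integral_mul_fderiv_eq_neg_fderiv_mul_of_integrable (hI2 i) (hI1 i) (hI3 i)
      (fun x _ => hw.differentiable one_ne_zero x)
      (fun x _ => (hci i).differentiable one_ne_zero x)
  obtain ⟨R, hR0, hR⟩ : ∃ R : ℝ, 0 < R ∧ tsupport ψ ⊆ Metric.ball 0 R := by
    obtain ⟨R, hR⟩ := hψs.isCompact.isBounded.subset_ball (0 : Euc N)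
    exact ⟨max R 1, by positivity, hR.trans (Metric.ball_subset_ball (le_max_left _ _))⟩
  rw [hibp]
  have hnorm : ‖∫ x, fderiv ℝ w x (ψ x)‖ₑ ≤ ENNReal.ofReal A := by
    refine (enorm_integral_le_lintegral_enorm _).trans (le_trans ?_ (hb R hR0))
    rw [← lintegral_indicator measurableSet_ball]
    refine lintegral_mono fun x => ?_
    by_cases hx : x ∈ Metric.ball (0 : Euc N) R
    · rw [indicator_of_mem hx, ← ofReal_norm, ← ofReal_norm]
      refine ENNReal.ofReal_le_ofReal (((fderiv ℝ w x).le_opNorm _).trans ?_)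
      exact mul_le_of_le_one_right (norm_nonneg _) (hψ1 x)
    · rw [image_eq_zero_of_notMem_tsupport (mt (@hR x) hx)]
      simp
  rw [← ofReal_norm, ENNReal.ofReal_le_ofReal_iff hA, Real.norm_eq_abs] at hnorm
  exact (neg_le_abs _).trans hnorm

/-- Mollifications converge to `u` against continuous compactly supported test functions: the
pairing `∫ (φₙ ⋆ u) g` is the value at `0` of `φₙ ⋆ (u ⋆ ǧ)` with `ǧ(x) = g(-x)`. -/
lemma tendsto_integral_convolution {N : ℕ} {u : Euc N → ℝ} (hu : LocallyIntegrable u volume)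
    {g : Euc N → ℝ} (hg : Continuous g) (hgs : HasCompactSupport g)
    {φ : ℕ → ContDiffBump (0 : Euc N)} (hφ : Tendsto (fun n => (φ n).rOut) atTop (𝓝 0)) :
    Tendsto (fun n => ∫ x, ((φ n).normed volume ⋆[ContinuousLinearMap.lsmul ℝ ℝ, volume] u) x * g x)
      atTop (𝓝 (∫ x, u x * g x)) := by
  set k : Euc N → ℝ := fun x => g (-x) with hk
  have hkc : Continuous k := hg.comp continuous_neg
  have hks : HasCompactSupport k := hgs.comp_homeomorph (Homeomorph.neg (Euc N))
  have hev : ∀ f : Euc N → ℝ,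
      (f ⋆[ContinuousLinearMap.lsmul ℝ ℝ, volume] k) 0 = ∫ x, f x * g x := by
    intro f
    simp [convolution_def, hk]
  have hun : LocallyIntegrable (fun x => ‖u x‖) volume := fun x => by
    obtain ⟨s, hs, hs'⟩ := hu x
    exact ⟨s, hs, hs'.norm⟩
  have hGc : Continuous (u ⋆[ContinuousLinearMap.lsmul ℝ ℝ, volume] k) :=
    hks.continuous_convolution_right _ hu hkc
  have hlim := ContDiffBump.convolution_tendsto_right_of_continuous (μ := volume) hφ hGc 0
  rw [hev] at hlim
  refine hlim.congr fun n => ?_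
  rw [← hev]
  have hρc : Continuous ((φ n).normed (volume : Measure (Euc N))) := (φ n).continuous_normed
  have hρs : HasCompactSupport ((φ n).normed (volume : Measure (Euc N))) :=
    (φ n).hasCompactSupport_normed
  symm
  refine convolution_assoc _ _ _ _ (fun x y z => by simp [mul_assoc]) hρc.aestronglyMeasurable
    hu.aestronglyMeasurable hkc.aestronglyMeasurable
    (ae_of_all _ fun y => hρs.convolutionExists_left _ hρc hu y)
    (ae_of_all _ fun y => hks.norm.convolutionExists_right _ hun hkc.norm y)
    (hρs.norm.convolutionExists_left _ hρc.norm (Continuous.locallyIntegrable ?_) _)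
  exact hks.norm.continuous_convolution_right _ hun hkc.norm

lemma Mollifier.tvset_le_of_measurable {N : ℕ} (hN : 0 < N) {μ₁ : ℝ → ℝ} (h : Mollifier N μ₁)
    {u : Euc N → ℝ} (hu : LocallyIntegrable u volume) (hum : Measurable u) {C : ℝ} (hC : 0 ≤ C)
    (hbound : ∀ lam R : ℝ, 0 < lam → 0 < R → ∀ x₀ : Euc N,
      (1 / lam) * ∫ z : Euc N, ∫ x in Metric.ball x₀ R, |u x - u (x - z)| * moll μ₁ lam z
        ≤ C) :
    ∀ a ∈ TVset u, a ≤ C / (∫ x : Euc N, |x ⟨0, hN⟩| * μ₁ ‖x‖) := by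
  rintro a ⟨ψ, hψ, hψs, hψ1, rfl⟩
  set C₁ := ∫ x : Euc N, |x ⟨0, hN⟩| * μ₁ ‖x‖ with hC₁
  have hpos : 0 < C₁ := h.coord_pos hN _
  have hI := h.incrementBound hu hum hbound
  let φ : ℕ → ContDiffBump (0 : Euc N) := fun n =>
    { rIn := 1 / ((n : ℝ) + 1) / 2
      rOut := 1 / ((n : ℝ) + 1)
      rIn_pos := by positivity
      rIn_lt_rOut := half_lt_self (by positivity) }
  have hφ : Tendsto (fun n => (φ n).rOut) atTop (𝓝 0) := tendsto_one_div_add_atTop_nhds_zero_nat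
  have hci : ∀ i, ContDiff ℝ 1 fun y => ψ y i := fun i => contDiff_euclidean.1 hψ i
  have hsi : ∀ i, HasCompactSupport fun y => ψ y i := fun i =>
    hψs.comp_left (g := fun v : Euc N => v i) rfl
  have hdivc : Continuous fun x =>
      ∑ i, fderiv ℝ (fun y => ψ y i) x (EuclideanSpace.single i 1) :=
    continuous_finsetSum _ fun i _ =>
      ((hci i).continuous_fderiv one_ne_zero).clm_apply continuous_const
  have hdivs : HasCompactSupport fun x =>
      ∑ i, fderiv ℝ (fun y => ψ y i) x (EuclideanSpace.single i 1) := by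
    refine HasCompactSupport.intro hψs.isCompact fun x hx => Finset.sum_eq_zero fun i _ => ?_
    have hx' : x ∉ tsupport fun y => ψ y i := fun hc =>
      hx (tsupport_comp_subset (g := fun v : Euc N => v i) rfl ψ hc)
    rw [fderiv_of_notMem_tsupport (𝕜 := ℝ) hx']
    rfl
  refine le_of_tendsto (tendsto_integral_convolution hu hdivc hdivs hφ)
    (Eventually.of_forall fun n => ?_)
  have hw : ContDiff ℝ 1
      ((φ n).normed volume ⋆[ContinuousLinearMap.lsmul ℝ ℝ, volume] u) := by
    exact (φ n).hasCompactSupport_normed.contDiff_convolution_left _ (n := 1)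
      (φ n).contDiff_normed hu
  have hwI := hI.convolution h hu hum (ρ := (φ n).normed volume) (φ n).continuous_normed
    (φ n).hasCompactSupport_normed (φ n).nonneg_normed (φ n).integral_normed
  refine integral_mul_div_le hw (by positivity) (fun R hR => ?_) hψ hψs hψ1
  have := hwI.lintegral_fderiv h ⟨0, hN⟩ hw hR 0
  rw [ENNReal.ofReal_div_of_pos hpos, ENNReal.le_div_iff_mul_le (by simp [hpos]) (by simp),
    mul_comm]
  exact this

/-- The bound on `TVset u`, after replacing `u` by a measurable representative. -/
lemma Mollifier.tvset_le {N : ℕ} (hN : 0 < N) {μ₁ : ℝ → ℝ} (h : Mollifier N μ₁)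
    {u : Euc N → ℝ} (hu : LocallyIntegrable u volume) {C : ℝ} (hC : 0 ≤ C)
    (hbound : ∀ lam R : ℝ, 0 < lam → 0 < R → ∀ x₀ : Euc N,
      (1 / lam) * ∫ z : Euc N, ∫ x in Metric.ball x₀ R, |u x - u (x - z)| * moll μ₁ lam z
        ≤ C) :
    ∀ a ∈ TVset u, a ≤ C / (∫ x : Euc N, |x ⟨0, hN⟩| * μ₁ ‖x‖) := by
  obtain ⟨v, hvm, huv⟩ := hu.aestronglyMeasurable
  have hv : LocallyIntegrable v volume := fun x => by
    obtain ⟨s, hs, hs'⟩ := hu x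
    exact ⟨s, hs, hs'.congr (ae_restrict_of_ae huv)⟩
  rintro a ⟨ψ, hψ, hψs, hψ1, rfl⟩
  refine h.tvset_le_of_measurable hN hv hvm.measurable hC ?_ _
    ⟨ψ, hψ, hψs, hψ1, integral_congr_ae ?_⟩
  · intro lam R hlam hR x₀
    convert hbound lam R hlam hR x₀ using 4 with z
    refine integral_congr_ae (ae_restrict_of_ae ?_)
    filter_upwards [huv, (measurePreserving_sub_right volume z).quasiMeasurePreserving.ae huv]
      with x h1 h2
    rw [h1, h2]
  · filter_upwards [huv] with x hx
    rw [hx]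

/-- Proposition 4.3: if `(1/λ) ∫_{ℝ^N} ∫_{B(x₀,R)} |u(x) - u(x-z)| μ(z) dx dz ≤ C̃`
for all `λ, R > 0` and all `x₀`, then `u ∈ BV(ℝ^N;ℝ)` and `TV(u) ≤ C̃ / C₁` where
`C₁ = ∫_{ℝ^N} |x₁| μ₁(‖x‖) dx ∈ (0,1)`. -/
theorem bv_of_moll_bound (N : ℕ) (hN : 0 < N) (μ₁ : ℝ → ℝ) (h : Mollifier N μ₁)
    (u : Euc N → ℝ) (hu : LocallyIntegrable u volume)
    (Ctil : ℝ) (hCtil : 0 ≤ Ctil)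
    (hbound : ∀ lam R : ℝ, 0 < lam → 0 < R → ∀ x₀ : Euc N,
      (1 / lam) * ∫ z : Euc N, ∫ x in Metric.ball x₀ R, |u x - u (x - z)| * moll μ₁ lam z
        ≤ Ctil) :
    IsBV u
    ∧ TV u ≤ Ctil / (∫ x : Euc N, |x ⟨0, hN⟩| * μ₁ ‖x‖)
    ∧ 0 < (∫ x : Euc N, |x ⟨0, hN⟩| * μ₁ ‖x‖)
    ∧ (∫ x : Euc N, |x ⟨0, hN⟩| * μ₁ ‖x‖) < 1 := by
  have hle := h.tvset_le hN hu hCtil hbound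
  have hpos := h.coord_pos hN ⟨0, hN⟩
  exact ⟨⟨_, hle⟩, Real.sSup_le hle (div_nonneg hCtil hpos.le), hpos, h.coord_lt_one hN _⟩
end
end

section
/- Let u ∈ C¹(ℝ^N; ℝ) with ∫_{ℝ^N} ‖∇u(x)‖ dx < +∞. Then TV(u) = (1/C₁) lim_{λ→0} (1/λ) ∫_{ℝ^N} ∫_{ℝ^N} |u(x) − u(x−z)| μ(z) dx dz, where C₁ = ∫_{ℝ^N} |x₁| μ₁(‖x‖) dx; equivalently, the limit equals C₁ ∫_{ℝ^N} ‖∇u(x)‖ dx. -/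
/-!
Write `∇u` for the gradient, represented by `fderiv ℝ u`.

*Total variation.* Integration by parts turns `∫ u div ψ` into `-∫ ∇u · ψ`, which is at most
`∫ ‖∇u‖`. Conversely, the fields `-χ_n ∇u / (‖∇u‖ + 1/(n+1))` with cut-offs `χ_n ↑ 1` make
`-∫ ∇u · ψ` tend to `∫ ‖∇u‖`; they are only continuous, so they are first mollified
(`integral_neg_fderiv_le_of_upperBound`).

*Nonlocal limit.* The substitution `z = λ w` turns the functional into
`∫∫ |u(x) - u(x - λ w)| / λ · μ₁(‖w‖) dx dw`. For each `w` and every `λ > 0` the inner integral is at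
most `∫ |∇u(x) · w| dx` (`lintegral_sub_translate_le`), while the integrand converges pointwise to
`|∇u(x) · w| μ₁(‖w‖)`; so Fatou's lemma gives the limit `∫∫ |∇u(x) · w| μ₁(‖w‖) dx dw`
(`tendsto_nonlocal`). By Tonelli and rotation invariance (`lintegral_clm_radial`) this equals
`C₁ ∫ ‖∇u‖`. The convergence is proved for lower integrals, where no integrability has to be carried
along, and transferred to Bochner integrals at the end.
-/

open MeasureTheory Real Set Filter Topology RealInnerProductSpace

noncomputable section

/-! ### Total variation of a `C¹` function -/

/-- Integration by parts against a compactly supported `C¹` field: `∫ u div ψ = -∫ ∇u · ψ`. -/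
lemma integral_mul_div_eq {N : ℕ} {u : Euc N → ℝ} (hu : ContDiff ℝ 1 u) {ψ : Euc N → Euc N}
    (hψ : ContDiff ℝ 1 ψ) (hc : HasCompactSupport ψ) :
    ∫ x, u x * ∑ i, fderiv ℝ (fun y => ψ y i) x (EuclideanSpace.single i 1)
      = ∫ x, - fderiv ℝ u x (ψ x) := by
  have hψi : ∀ i, ContDiff ℝ 1 (fun y => ψ y i) := fun i => by fun_prop
  have hci : ∀ i, HasCompactSupport (fun y => ψ y i) := fun i =>
    hc.comp_left (g := fun v : Euc N => v i) rfl
  have hdu : Continuous (fderiv ℝ u) := hu.continuous_fderiv one_ne_zero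
  have h1 : ∀ i : Fin N, Integrable
      (fun x => u x * fderiv ℝ (fun y => ψ y i) x (EuclideanSpace.single i 1)) := fun i => by
    apply Continuous.integrable_of_hasCompactSupport
    · exact hu.continuous.mul (((hψi i).continuous_fderiv one_ne_zero).clm_apply continuous_const)
    · exact ((hci i).fderiv_apply ℝ _).mul_left
  have h2 : ∀ i : Fin N, Integrable
      (fun x => fderiv ℝ u x (EuclideanSpace.single i 1) * ψ x i) := fun i => by
    apply Continuous.integrable_of_hasCompactSupport
    · exact (hdu.clm_apply continuous_const).mul (hψi i).continuous
    · exact (hci i).mul_left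
  have h3 : ∀ i : Fin N, Integrable (fun x => u x * ψ x i) := fun i => by
    apply Continuous.integrable_of_hasCompactSupport
    · exact hu.continuous.mul (hψi i).continuous
    · exact (hci i).mul_left
  have key : ∀ x, fderiv ℝ u x (ψ x)
      = ∑ i, fderiv ℝ u x (EuclideanSpace.single i 1) * ψ x i := fun x => by
    conv_lhs => rw [← (EuclideanSpace.basisFun (Fin N) ℝ).sum_repr (ψ x)]
    simp [map_sum, mul_comm]
  simp_rw [Finset.mul_sum, key, integral_neg]
  rw [integral_finsetSum _ (fun i _ => h1 i), integral_finsetSum _ (fun i _ => h2 i),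
    ← Finset.sum_neg_distrib]
  refine Finset.sum_congr rfl fun i _ => ?_
  exact integral_mul_fderiv_eq_neg_fderiv_mul_of_integrable (h2 i) (h1 i) (h3 i)
    (fun x _ => (hu.differentiable one_ne_zero) x)
    (fun x _ => ((hψi i).differentiable one_ne_zero) x)

/-- An upper bound of the test values also bounds `-∫ ∇u · v` for fields `v` that are merely
continuous: convolving `v` with bump functions keeps `‖v‖ ≤ 1` and compact support, and the
integrals converge by domination by `‖∇u‖`. -/
lemma integral_neg_fderiv_le_of_upperBound {N : ℕ} {u : Euc N → ℝ} (hu : ContDiff ℝ 1 u)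
    (hgrad : Integrable (fun x : Euc N => ‖fderiv ℝ u x‖)) {B : ℝ}
    (hB : B ∈ upperBounds (TVset u)) {v : Euc N → Euc N} (hv : Continuous v)
    (hvc : HasCompactSupport v) (hv1 : ∀ x, ‖v x‖ ≤ 1) :
    ∫ x, - fderiv ℝ u x (v x) ≤ B := by
  have hdu : Continuous (fderiv ℝ u) := hu.continuous_fderiv one_ne_zero
  let φ : ℕ → ContDiffBump (0 : Euc N) := fun n =>
    ⟨1 / ((n : ℝ) + 1) / 2, 1 / ((n : ℝ) + 1), by positivity,
      half_lt_self (by positivity)⟩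
  have hφ : Tendsto (fun n => (φ n).rOut) atTop (𝓝 0) :=
    tendsto_one_div_add_atTop_nhds_zero_nat
  let w : ℕ → Euc N → Euc N := fun n =>
    convolution ((φ n).normed volume) v (ContinuousLinearMap.lsmul ℝ ℝ) volume
  have hw : ∀ n, ContDiff ℝ 1 (w n) := fun n =>
    (φ n).hasCompactSupport_normed.contDiff_convolution_left _
      (n := 1) (φ n).contDiff_normed hv.locallyIntegrable
  have hwc : ∀ n, HasCompactSupport (w n) := fun n =>
    HasCompactSupport.convolution _ (φ n).hasCompactSupport_normed hvc
  have hw1 : ∀ n x, ‖w n x‖ ≤ 1 := fun n x => by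
    rw [← dist_zero_right]
    exact dist_convolution_le zero_le_one (φ n).support_normed_eq.subset (φ n).nonneg_normed
      (φ n).integral_normed hv.aestronglyMeasurable (fun y _ => by simpa using hv1 y)
  have hlim : Tendsto (fun n => ∫ x, - fderiv ℝ u x (w n x)) atTop
      (𝓝 (∫ x, - fderiv ℝ u x (v x))) := by
    refine tendsto_integral_of_dominated_convergence _ (fun n => ?_) hgrad (fun n => ?_) ?_
    · exact ((hdu.clm_apply (hw n).continuous).neg).aestronglyMeasurable
    · refine Eventually.of_forall fun x => ?_
      rw [norm_neg]
      exact (fderiv ℝ u x).le_of_opNorm_le_of_le le_rfl (hw1 n x) |>.trans (by simp)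
    · refine Eventually.of_forall fun x => ?_
      exact (((fderiv ℝ u x).continuous.tendsto _).comp
        (ContDiffBump.convolution_tendsto_right_of_continuous hφ hv x)).neg
  refine le_of_tendsto' hlim fun n => ?_
  rw [← integral_mul_div_eq hu (hw n) (hwc n)]
  exact hB ⟨w n, hw n, hwc n, hw1 n, rfl⟩

/-- The total variation of a `C¹` function with integrable gradient is the `L¹` norm of the gradient.
The supremum is approached along truncations of the regularized field `-∇u / (‖∇u‖ + ε)`. -/
lemma TV_eq {N : ℕ} {u : Euc N → ℝ} (hu : ContDiff ℝ 1 u)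
    (hgrad : Integrable (fun x : Euc N => ‖fderiv ℝ u x‖)) :
    TV u = ∫ x, ‖fderiv ℝ u x‖ := by
  have hdu : Continuous (fderiv ℝ u) := hu.continuous_fderiv one_ne_zero
  refine IsLUB.csSup_eq ⟨?_, ?_⟩ ⟨_, 0, contDiff_const, HasCompactSupport.zero, by simp, rfl⟩
  · rintro _ ⟨ψ, hψ, hc, h1, rfl⟩
    rw [integral_mul_div_eq hu hψ hc]
    have hle : ∀ x, ‖- fderiv ℝ u x (ψ x)‖ ≤ ‖fderiv ℝ u x‖ := fun x => by
      rw [norm_neg]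
      exact (fderiv ℝ u x).le_of_opNorm_le_of_le le_rfl (h1 x) |>.trans (by simp)
    refine integral_mono (hgrad.mono' ?_ (Eventually.of_forall hle)) hgrad
      fun x => (le_abs_self _).trans (hle x)
    exact (hdu.clm_apply hψ.continuous).neg.aestronglyMeasurable
  · intro B hB
    let g : Euc N → Euc N := fun x => (InnerProductSpace.toDual ℝ (Euc N)).symm (fderiv ℝ u x)
    have hg : Continuous g := (LinearIsometryEquiv.continuous _).comp hdu
    have hgn : ∀ x, ‖g x‖ = ‖fderiv ℝ u x‖ := fun x => LinearIsometryEquiv.norm_map _ _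
    have hgi : ∀ x, fderiv ℝ u x (g x) = ‖g x‖ ^ 2 := fun x => by
      rw [← real_inner_self_eq_norm_sq]
      exact (InnerProductSpace.toDual_symm_apply).symm
    let χ : ℕ → Euc N → ℝ := fun n x => max 0 (min 1 (n - ‖x‖))
    have hχ0 : ∀ n x, 0 ≤ χ n x := fun n x => le_max_left _ _
    have hχ1 : ∀ n x, χ n x ≤ 1 := fun n x => max_le zero_le_one (min_le_left _ _)
    have hχc : ∀ n, Continuous (χ n) := fun n => by fun_prop
    have hε : ∀ n : ℕ, (0 : ℝ) < 1 / ((n : ℝ) + 1) := fun n => by positivity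
    have hd : ∀ (n : ℕ) x, 0 < ‖g x‖ + 1 / ((n : ℝ) + 1) := fun n x =>
      add_pos_of_nonneg_of_pos (norm_nonneg _) (hε n)
    let v : ℕ → Euc N → Euc N := fun n x => -((χ n x / (‖g x‖ + 1 / ((n : ℝ) + 1))) • g x)
    have hv : ∀ n, Continuous (v n) := fun n =>
      (((hχc n).div (hg.norm.add continuous_const) fun x => (hd n x).ne').smul hg).neg
    have hvc : ∀ n, HasCompactSupport (v n) := fun n => by
      refine HasCompactSupport.intro (isCompact_closedBall (0 : Euc N) n) fun x hx => ?_
      have : (n : ℝ) < ‖x‖ := by simpa using hx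
      have h0 : χ n x = 0 := max_eq_left ((min_le_right _ _).trans (by linarith))
      simp [v, h0]
    have hq : ∀ (n : ℕ) x, ‖g x‖ / (‖g x‖ + 1 / ((n : ℝ) + 1)) ≤ 1 := fun n x =>
      (div_le_one (hd n x)).2 (by linarith [hε n])
    have hv1 : ∀ n x, ‖v n x‖ ≤ 1 := fun n x => by
      have : ‖v n x‖ = χ n x * (‖g x‖ / (‖g x‖ + 1 / ((n : ℝ) + 1))) := by
        simp only [v, norm_neg, norm_smul]
        rw [Real.norm_of_nonneg (div_nonneg (hχ0 n x) (hd n x).le)]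
        ring
      rw [this]
      exact mul_le_one₀ (hχ1 n x) (div_nonneg (norm_nonneg _) (hd n x).le) (hq n x)
    have hval : ∀ n x, - fderiv ℝ u x (v n x)
        = χ n x * (‖g x‖ ^ 2 / (‖g x‖ + 1 / ((n : ℝ) + 1))) := fun n x => by
      simp only [v, map_neg, map_smul, hgi, smul_eq_mul, neg_neg]
      ring
    have hlim : Tendsto (fun n => ∫ x, - fderiv ℝ u x (v n x)) atTop
        (𝓝 (∫ x, ‖fderiv ℝ u x‖)) := by
      refine tendsto_integral_of_dominated_convergence _ (fun n => ?_) hgrad (fun n => ?_) ?_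
      · exact ((hdu.clm_apply (hv n)).neg).aestronglyMeasurable
      · refine Eventually.of_forall fun x => ?_
        rw [norm_neg]
        exact (fderiv ℝ u x).le_of_opNorm_le_of_le le_rfl (hv1 n x) |>.trans (by simp)
      · refine Eventually.of_forall fun x => ?_
        simp_rw [hval, ← hgn]
        have hχlim : Tendsto (fun n => χ n x) atTop (𝓝 1) := by
          refine tendsto_const_nhds.congr' ?_
          filter_upwards [eventually_ge_atTop ⌈‖x‖ + 1⌉₊] with n hn
          have : ‖x‖ + 1 ≤ n := (Nat.le_ceil _).trans (by exact_mod_cast hn)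
          simp only [χ]
          rw [min_eq_left (by linarith), max_eq_right zero_le_one]
        by_cases h0 : ‖g x‖ = 0
        · simp [h0]
        · have h2 : Tendsto (fun n : ℕ => ‖g x‖ ^ 2 / (‖g x‖ + 1 / ((n : ℝ) + 1))) atTop
              (𝓝 (‖g x‖ ^ 2 / (‖g x‖ + 0))) :=
            tendsto_const_nhds.div
              (tendsto_const_nhds.add tendsto_one_div_add_atTop_nhds_zero_nat) (by simpa using h0)
          have h3 := hχlim.mul h2
          have h4 : 1 * (‖g x‖ ^ 2 / (‖g x‖ + 0)) = ‖g x‖ := by field_simp; ring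
          rwa [h4] at h3
    exact le_of_tendsto' hlim fun n =>
      integral_neg_fderiv_le_of_upperBound hu hgrad hB (hv n) (hvc n) (hv1 n)

/-! ### The nonlocal functional -/

/-- The `L¹` distance between `u` and its translate by `z` is at most `∫ |∇u · z|`: write the increment
as an integral of `∇u · z` along the segment and use translation invariance. -/
lemma lintegral_sub_translate_le {N : ℕ} {u : Euc N → ℝ} (hu : ContDiff ℝ 1 u) (z : Euc N) :
    ∫⁻ x, ‖u x - u (x - z)‖ₑ ≤ ∫⁻ x, ‖fderiv ℝ u x z‖ₑ := by
  have hdu : Continuous (fderiv ℝ u) := hu.continuous_fderiv one_ne_zero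
  have hmeas : Measurable (fun p : Euc N × ℝ => ‖fderiv ℝ u (p.1 + (p.2 - 1) • z) z‖ₑ) := by
    apply Continuous.measurable
    exact ((hdu.comp (by fun_prop)).clm_apply continuous_const).enorm
  have hpt : ∀ x, ‖u x - u (x - z)‖ₑ
      ≤ ∫⁻ s in Ioc (0 : ℝ) 1, ‖fderiv ℝ u (x + (s - 1) • z) z‖ₑ := fun x => by
    have hder : ∀ s ∈ uIcc (0 : ℝ) 1, HasDerivAt (fun s : ℝ => u (x + (s - 1) • z))
        (fderiv ℝ u (x + (s - 1) • z) z) s := fun s _ => by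
      have h1 : HasDerivAt (fun s : ℝ => x + (s - 1) • z) z s := by
        simpa using (((hasDerivAt_id s).sub_const 1).smul_const z).const_add x
      exact ((hu.differentiable one_ne_zero _).hasFDerivAt).comp_hasDerivAt s h1
    have hint := intervalIntegral.integral_eq_sub_of_hasDerivAt hder
      (Continuous.intervalIntegrable
        ((hdu.comp (by fun_prop)).clm_apply continuous_const) _ _)
    have h2 : u x - u (x - z) = ∫ s in Ioc (0 : ℝ) 1, fderiv ℝ u (x + (s - 1) • z) z := by
      rw [← intervalIntegral.integral_of_le zero_le_one, hint]
      simp [sub_eq_add_neg]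
    rw [h2]
    exact enorm_integral_le_lintegral_enorm _
  calc ∫⁻ x, ‖u x - u (x - z)‖ₑ
      ≤ ∫⁻ x, ∫⁻ s in Ioc (0 : ℝ) 1, ‖fderiv ℝ u (x + (s - 1) • z) z‖ₑ := lintegral_mono hpt
    _ = ∫⁻ s in Ioc (0 : ℝ) 1, ∫⁻ x, ‖fderiv ℝ u (x + (s - 1) • z) z‖ₑ :=
        lintegral_lintegral_swap hmeas.aemeasurable
    _ = ∫⁻ s in Ioc (0 : ℝ) 1, ∫⁻ x, ‖fderiv ℝ u x z‖ₑ := by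
        refine lintegral_congr fun s => ?_
        exact lintegral_add_right_eq_self (fun x => ‖fderiv ℝ u x z‖ₑ) ((s - 1) • z)
    _ = ∫⁻ x, ‖fderiv ℝ u x z‖ₑ := by simp

/-- Against a radial weight, every linear form `L` has the same integral as `‖L‖ |x₁|`, because a
reflection carries the vector representing `L` to `‖L‖ e₁`. -/
lemma lintegral_clm_radial {N : ℕ} (hN : 0 < N) (k : ℝ → ENNReal) (L : Euc N →L[ℝ] ℝ) :
    ∫⁻ w : Euc N, ‖L w‖ₑ * k ‖w‖ = ‖L‖ₑ * ∫⁻ w : Euc N, ‖w ⟨0, hN⟩‖ₑ * k ‖w‖ := by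
  let v : Euc N := (InnerProductSpace.toDual ℝ (Euc N)).symm L
  have hvn : ‖v‖ = ‖L‖ := LinearIsometryEquiv.norm_map _ _
  have hLv : ∀ w, L w = inner ℝ v w := fun w => (InnerProductSpace.toDual_symm_apply).symm
  let e : Euc N := ‖v‖ • EuclideanSpace.single ⟨0, hN⟩ 1
  have hve : ‖v‖ = ‖e‖ := by simp [e, norm_smul]
  let R : Euc N ≃ₗᵢ[ℝ] Euc N := (ℝ ∙ (v - e))ᗮ.reflection
  have hR : R v = e := Submodule.reflection_sub hve
  have hinner : ∀ w, L w = ‖v‖ * (R w) ⟨0, hN⟩ := fun w => by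
    rw [hLv, ← R.inner_map_map, hR]
    simp [e, inner_smul_left, EuclideanSpace.inner_single_left]
  have hmp := R.measurePreserving.lintegral_comp_emb R.toHomeomorph.measurableEmbedding
    (fun w => ‖v‖ₑ * (‖w ⟨0, hN⟩‖ₑ * k ‖w‖))
  rw [lintegral_const_mul' _ (fun w : Euc N => ‖w ⟨0, hN⟩‖ₑ * k ‖w‖) enorm_ne_top] at hmp
  have h1 : ‖v‖ₑ = ‖L‖ₑ := by rw [← enorm_norm, hvn, enorm_norm]
  rw [← h1, ← hmp]
  refine lintegral_congr fun w => ?_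
  rw [hinner, enorm_mul, enorm_norm, R.norm_map, mul_assoc]

lemma tendsto_diffQuot {N : ℕ} {u : Euc N → ℝ} (hu : ContDiff ℝ 1 u) (x w : Euc N) :
    Tendsto (fun lam : ℝ => lam⁻¹ * (u x - u (x - lam • w))) (𝓝[>] 0)
      (𝓝 (fderiv ℝ u x w)) := by
  have h1 : HasDerivAt (fun s : ℝ => x - s • w) (-w) 0 := by
    simpa using ((hasDerivAt_id (0 : ℝ)).smul_const w).const_sub x
  have h2 : HasDerivAt (fun s : ℝ => u (x - s • w)) (fderiv ℝ u x (-w)) 0 := by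
    have := (hu.differentiable one_ne_zero (x - (0 : ℝ) • w)).hasFDerivAt.comp_hasDerivAt 0 h1
    rw [zero_smul, sub_zero] at this
    exact this
  have h3 := (h2.tendsto_slope_zero_right).neg
  simpa [← mul_neg] using h3

/-- The bound of `lintegral_sub_translate_le` for difference quotients; it is uniform in `lam`. -/
lemma lintegral_diffQuot_le {N : ℕ} {u : Euc N → ℝ} (hu : ContDiff ℝ 1 u) {lam : ℝ}
    (hlam : 0 < lam) (w : Euc N) {c : ENNReal} (hc : c ≠ ⊤) :
    ∫⁻ x, ‖lam⁻¹ * (u x - u (x - lam • w))‖ₑ * c ≤ ∫⁻ x, ‖fderiv ℝ u x w‖ₑ * c := by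
  rw [lintegral_mul_const' _ _ hc, lintegral_mul_const' _ _ hc]
  refine mul_le_mul' ?_ le_rfl
  simp_rw [enorm_mul]
  rw [lintegral_const_mul' _ _ enorm_ne_top]
  refine (mul_le_mul' le_rfl (lintegral_sub_translate_le hu (lam • w))).trans ?_
  simp_rw [map_smul, smul_eq_mul, enorm_mul]
  rw [lintegral_const_mul' _ _ enorm_ne_top, ← mul_assoc, ← enorm_mul,
    inv_mul_cancel₀ hlam.ne']
  simp

/-- Convergence of the rescaled nonlocal functional, for an arbitrary finite weight `ρ`. Fatou's lemma
on the product space gives the lower bound and `lintegral_diffQuot_le` the upper bound. -/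
lemma tendsto_nonlocal {N : ℕ} {u : Euc N → ℝ} (hu : ContDiff ℝ 1 u)
    {ρ : Euc N → ENNReal} (hρ : Measurable ρ) (hρt : ∀ w, ρ w ≠ ⊤) :
    Tendsto (fun lam : ℝ =>
        ∫⁻ w, ∫⁻ x, ‖lam⁻¹ * (u x - u (x - lam • w))‖ₑ * ρ w) (𝓝[>] 0)
      (𝓝 (∫⁻ w, ∫⁻ x, ‖fderiv ℝ u x w‖ₑ * ρ w)) := by
  have hdu : Continuous (fderiv ℝ u) := hu.continuous_fderiv one_ne_zero
  have huc := hu.continuous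
  have hm : ∀ lam : ℝ, Measurable (fun p : Euc N × Euc N =>
      ‖lam⁻¹ * (u p.2 - u (p.2 - lam • p.1))‖ₑ * ρ p.1) := fun lam => by
    refine Measurable.mul (Continuous.measurable ?_) (hρ.comp measurable_fst)
    fun_prop
  have hm' : Measurable (fun p : Euc N × Euc N => ‖fderiv ℝ u p.2 p.1‖ₑ * ρ p.1) := by
    refine Measurable.mul (Continuous.measurable ?_) (hρ.comp measurable_fst)
    exact ((hdu.comp continuous_snd).clm_apply continuous_fst).enorm
  refine tendsto_of_le_liminf_of_limsup_le ?_ ?_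
  · have hpt : ∀ p : Euc N × Euc N, ‖fderiv ℝ u p.2 p.1‖ₑ * ρ p.1
        = liminf (fun lam : ℝ => ‖lam⁻¹ * (u p.2 - u (p.2 - lam • p.1))‖ₑ * ρ p.1)
          (𝓝[>] 0) := fun p => by
      refine (Tendsto.liminf_eq ?_).symm
      exact ENNReal.Tendsto.mul_const
        ((continuous_enorm.tendsto _).comp (tendsto_diffQuot hu p.2 p.1)) (Or.inr (hρt _))
    have h1 := lintegral_liminf_le (μ := (volume : Measure (Euc N)).prod volume)
      (u := 𝓝[>] (0 : ℝ)) hm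
    simp_rw [← hpt] at h1
    rw [lintegral_prod _ hm'.aemeasurable] at h1
    exact h1.trans_eq (congrArg (liminf · (𝓝[>] 0))
      (funext fun lam => lintegral_prod _ (hm lam).aemeasurable))
  · refine limsup_le_of_le (by isBoundedDefault) ?_
    filter_upwards [self_mem_nhdsWithin] with lam hlam
    have hlam : 0 < lam := hlam
    exact lintegral_mono fun w => lintegral_diffQuot_le hu hlam w (hρt w)

/-- For `u ∈ C¹` with integrable gradient, `TV(u) = (1/C₁) lim_{λ→0⁺} (1/λ) ∫∫ |u(x)-u(x-z)| μ(z) dx dz`,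
the limit being `C₁ ∫_{ℝ^N} ‖∇u‖`, where `C₁ = ∫_{ℝ^N} |x₁| μ₁(‖x‖) dx`. -/
theorem tv_eq_limit_of_C1 (N : ℕ) (hN : 0 < N) (μ₁ : ℝ → ℝ) (h : Mollifier N μ₁)
    (u : Euc N → ℝ) (hu : ContDiff ℝ 1 u)
    (hgrad : Integrable (fun x : Euc N => ‖fderiv ℝ u x‖)) :
    TV u = (∫ x : Euc N, ‖fderiv ℝ u x‖)
    ∧ Tendsto
        (fun lam : ℝ =>
          (1 / lam) * ∫ z : Euc N, ∫ x : Euc N, |u x - u (x - z)| * moll μ₁ lam z)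
        (nhdsWithin 0 (Ioi 0))
        (nhds ((∫ x : Euc N, |x ⟨0, hN⟩| * μ₁ ‖x‖) * ∫ x : Euc N, ‖fderiv ℝ u x‖)) := by
  refine ⟨TV_eq hu hgrad, ?_⟩
  have hdu : Continuous (fderiv ℝ u) := hu.continuous_fderiv one_ne_zero
  have huc := hu.continuous
  have hμc : Continuous (fun w : Euc N => μ₁ ‖w‖) := h.smooth.continuous.comp continuous_norm
  have hμ0 : ∀ w : Euc N, 0 ≤ μ₁ ‖w‖ := fun w => h.nonneg _ (norm_nonneg w)
  have hμs : HasCompactSupport (fun w : Euc N => μ₁ ‖w‖) := by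
    refine HasCompactSupport.intro (isCompact_closedBall (0 : Euc N) 1) fun w hw => ?_
    exact h.supp _ (le_of_lt (by simpa using hw))
  let ρ : Euc N → ENNReal := fun w => ENNReal.ofReal (μ₁ ‖w‖)
  have hρ : Measurable ρ := hμc.measurable.ennreal_ofReal
  have hρt : ∀ w, ρ w ≠ ⊤ := fun w => ENNReal.ofReal_ne_top
  have hgradt : ∫⁻ x, ‖fderiv ℝ u x‖ₑ ≠ ⊤ := by
    have := hgrad.2.ne
    simpa [enorm_norm] using this
  -- Both factors of the limit as `toReal` of lower integrals.
  have hA : ∫ x, ‖fderiv ℝ u x‖ = (∫⁻ x, ‖fderiv ℝ u x‖ₑ).toReal :=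
    integral_norm_eq_lintegral_enorm hdu.aestronglyMeasurable
  have hCint : Integrable (fun w : Euc N => |w ⟨0, hN⟩| * μ₁ ‖w‖) := by
    apply Continuous.integrable_of_hasCompactSupport
    · exact Continuous.mul (by fun_prop) hμc
    · exact hμs.mul_left
  have hCe : ∀ w : Euc N, ‖w ⟨0, hN⟩‖ₑ * ρ w = ENNReal.ofReal (|w ⟨0, hN⟩| * μ₁ ‖w‖) :=
    fun w => by
      rw [ENNReal.ofReal_mul (abs_nonneg _), ← Real.norm_eq_abs, ofReal_norm]
  have hC : ∫ w : Euc N, |w ⟨0, hN⟩| * μ₁ ‖w‖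
      = (∫⁻ w : Euc N, ‖w ⟨0, hN⟩‖ₑ * ρ w).toReal := by
    simp_rw [hCe]
    exact integral_eq_lintegral_of_nonneg_ae
      (Eventually.of_forall fun w => mul_nonneg (abs_nonneg _) (hμ0 w)) hCint.1
  have hCt : ∫⁻ w : Euc N, ‖w ⟨0, hN⟩‖ₑ * ρ w ≠ ⊤ := by
    simp_rw [hCe]
    exact hCint.lintegral_lt_top.ne
  have hD : ∫⁻ w, ∫⁻ x, ‖fderiv ℝ u x w‖ₑ * ρ w
      = (∫⁻ x, ‖fderiv ℝ u x‖ₑ) * ∫⁻ w : Euc N, ‖w ⟨0, hN⟩‖ₑ * ρ w := by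
    rw [lintegral_lintegral_swap, ← lintegral_mul_const' _ _ hCt]
    · exact lintegral_congr fun x =>
        lintegral_clm_radial hN (fun r => ENNReal.ofReal (μ₁ r)) (fderiv ℝ u x)
    · refine (Measurable.mul (Continuous.measurable ?_) (hρ.comp measurable_fst)).aemeasurable
      exact ((hdu.comp continuous_snd).clm_apply continuous_fst).enorm
  have hDt : ∫⁻ w, ∫⁻ x, ‖fderiv ℝ u x w‖ₑ * ρ w ≠ ⊤ := by
    rw [hD]
    exact ENNReal.mul_ne_top hgradt hCt
  have hlim := (ENNReal.tendsto_toReal hDt).comp (tendsto_nonlocal hu hρ hρt)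
  rw [hD, ENNReal.toReal_mul, mul_comm, ← hA, ← hC] at hlim
  refine hlim.congr' ?_
  filter_upwards [self_mem_nhdsWithin] with lam hlam
  have hlam : 0 < lam := hlam
  have hm : Measurable (fun p : Euc N × Euc N =>
      ‖lam⁻¹ * (u p.2 - u (p.2 - lam • p.1))‖ₑ * ρ p.1) := by
    refine Measurable.mul (Continuous.measurable ?_) (hρ.comp measurable_fst)
    fun_prop
  have hfin : ∀ w, ∫⁻ x, ‖lam⁻¹ * (u x - u (x - lam • w))‖ₑ * ρ w < ⊤ := fun w => by
    refine (lintegral_diffQuot_le hu hlam w (hρt w)).trans_lt ?_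
    rw [lintegral_mul_const' _ _ (hρt w)]
    refine ENNReal.mul_lt_top ?_ (hρt w).lt_top
    calc ∫⁻ x, ‖fderiv ℝ u x w‖ₑ ≤ ∫⁻ x, ‖fderiv ℝ u x‖ₑ * ‖w‖ₑ :=
          lintegral_mono fun x => (fderiv ℝ u x).le_opENorm w
      _ = (∫⁻ x, ‖fderiv ℝ u x‖ₑ) * ‖w‖ₑ := lintegral_mul_const' _ _ enorm_ne_top
      _ < ⊤ := ENNReal.mul_lt_top hgradt.lt_top enorm_lt_top
  -- Substitute `z = lam • w` in the outer integral.
  have hscale := Measure.integral_comp_smul (volume : Measure (Euc N))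
    (fun z : Euc N => ∫ x : Euc N, |u x - u (x - z)| * moll μ₁ lam z) lam
  rw [finrank_euclideanSpace_fin, abs_of_pos (by positivity), smul_eq_mul] at hscale
  have hsub : ∫ z : Euc N, ∫ x : Euc N, |u x - u (x - z)| * moll μ₁ lam z
      = lam ^ N * ∫ w : Euc N, ∫ x : Euc N, |u x - u (x - lam • w)| * moll μ₁ lam (lam • w) := by
    rw [hscale]
    field_simp
  rw [Function.comp_apply, ← integral_toReal hm.lintegral_prod_right'.aemeasurable
    (Eventually.of_forall hfin), hsub, ← mul_assoc, ← integral_const_mul]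
  refine integral_congr_ae (Eventually.of_forall fun w => ?_)
  simp only
  rw [← integral_const_mul, integral_eq_lintegral_of_nonneg_ae]
  · congr 1
    refine lintegral_congr fun x => ?_
    rw [← ofReal_norm, ← ENNReal.ofReal_mul (norm_nonneg _)]
    congr 1
    have hn : ‖lam • w‖ / lam = ‖w‖ := by
      rw [norm_smul, Real.norm_of_nonneg hlam.le]
      field_simp
    rw [moll, hn, norm_mul, Real.norm_of_nonneg (inv_pos.2 hlam).le, Real.norm_eq_abs]
    field_simp
  · refine Eventually.of_forall fun x => ?_
    have : 0 ≤ moll μ₁ lam (lam • w) :=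
      mul_nonneg (by positivity) (h.nonneg _ (by positivity))
    simp only [Pi.zero_apply]
    positivity
  · exact Continuous.aestronglyMeasurable (by fun_prop)
end
end

section
/- There exists a constant K > 0 such that −μ₁'(‖z‖) ≤ K μ₁(‖z‖/2) for all z ∈ ℝ^N. -/
/-!
On `T`, the closure of `{r ≥ 0 | μ₁ r > 0}`, which is a compact subset of `[0, 1]`, monotonicity
of `μ₁` gives `μ₁ (r / 2) > 0`: near a positive `r ∈ T` there are points larger than `r / 2` at
which `μ₁` is positive. Hence `r ↦ -μ₁' r / μ₁ (r / 2)` is continuous on `T`, so it is bounded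
there. At a point of `[0, ∞)` outside `T` the function `μ₁` vanishes, so `μ₁' = 0` there: a positive
such point is a local minimum, and `μ₁' 0 = 0` by hypothesis. The inequality is then trivial.
-/


open MeasureTheory Real Set Filter Topology RealInnerProductSpace

noncomputable section

/-- There is a constant `K > 0` with `-μ₁'(‖z‖) ≤ K μ₁(‖z‖/2)` for all `z ∈ ℝ^N`. -/
theorem deriv_moll_bound (N : ℕ) (hN : 1 ≤ N) (μ₁ : ℝ → ℝ) (h : Mollifier N μ₁) :
    ∃ K : ℝ, 0 < K ∧ ∀ z : Euc N, -deriv μ₁ ‖z‖ ≤ K * μ₁ (‖z‖ / 2) := by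
  have hcont : Continuous μ₁ := h.smooth.continuous
  have hdcont : Continuous (deriv μ₁) := h.smooth.continuous_deriv (by norm_cast)
  have hanti : AntitoneOn μ₁ (Ici 0) := by
    refine antitoneOn_of_deriv_nonpos (convex_Ici 0) hcont.continuousOn
      (h.smooth.differentiable (by simp)).differentiableOn fun x hx => ?_
    rw [interior_Ici] at hx
    exact h.deriv_nonpos x (le_of_lt hx)
  set S : Set ℝ := {r | 0 ≤ r ∧ 0 < μ₁ r} with hS
  have hS01 : closure S ⊆ Icc 0 1 := by
    refine closure_minimal (fun r hr => ⟨hr.1, ?_⟩) isClosed_Icc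
    by_contra! hlt
    exact hr.2.ne' (h.supp r hlt.le)
  have hpos : ∀ r ∈ closure S, 0 < μ₁ (r / 2) := by
    intro r hr
    have hr0 : 0 ≤ r := (hS01 hr).1
    obtain ⟨x, hx, hxr⟩ : ∃ x ∈ S, r / 2 ≤ x := by
      rcases hr0.eq_or_lt with rfl | hr0
      · obtain ⟨x, hx⟩ := closure_nonempty_iff.1 ⟨_, hr⟩
        exact ⟨x, hx, by simpa using hx.1⟩
      · obtain ⟨x, hx, hxS⟩ := mem_closure_iff.1 hr (Ioi (r / 2)) isOpen_Ioi
          (by simpa using hr0)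
        exact ⟨x, hxS, le_of_lt hx⟩
    exact hx.2.trans_le (hanti (show 0 ≤ r / 2 by positivity) hx.1 hxr)
  obtain ⟨C, hC⟩ := (isCompact_Icc.of_isClosed_subset isClosed_closure
      hS01).exists_bound_of_continuousOn
    (f := fun r => deriv μ₁ r / μ₁ (r / 2))
    (hdcont.continuousOn.div (hcont.comp (continuous_id.div_const 2)).continuousOn
      fun r hr => (hpos r hr).ne')
  refine ⟨max C 1, by positivity, fun z => ?_⟩
  have hz : 0 ≤ ‖z‖ := norm_nonneg z
  generalize ‖z‖ = r at hz
  have hhalf : 0 ≤ μ₁ (r / 2) := h.nonneg _ (by positivity)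
  by_cases hr : r ∈ closure S
  · have hb := hC r hr
    rw [norm_div, Real.norm_eq_abs, Real.norm_eq_abs, abs_of_pos (hpos r hr),
      div_le_iff₀ (hpos r hr)] at hb
    calc -deriv μ₁ r ≤ |deriv μ₁ r| := neg_le_abs _
      _ ≤ C * μ₁ (r / 2) := hb
      _ ≤ max C 1 * μ₁ (r / 2) := by gcongr; exact le_max_left _ _
  · have hr0 : μ₁ r = 0 := by
      by_contra hne
      exact hr (subset_closure ⟨hz, lt_of_le_of_ne (h.nonneg r hz) (Ne.symm hne)⟩)
    have hd : deriv μ₁ r = 0 := by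
      -- `μ₁` may be negative to the left of `0`, so `r = 0` need not be a local minimum.
      rcases hz.eq_or_lt with rfl | hlt
      · simpa using h.derivZero 1 le_rfl
      · refine IsLocalMin.deriv_eq_zero ?_
        filter_upwards [Ioi_mem_nhds hlt] with x hx
        rw [hr0]
        exact h.nonneg x (le_of_lt hx)
    rw [hd, neg_zero]
    positivity
end
end
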